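/- Let 0 < p ≤ 1, let α, β ≥ 0, and let μ be a positive Borel measure on (0, ∞) with ∫_{(0,∞)} (1 + λ)^{-1} dμ(λ) < ∞. Let X = A + iB, where A and B are bounded self-adjoint operators on H, B is positive and invertible, and sin(pπ)·A − cos(pπ)·B is positive and invertible (i.e. X lies in the operator sector V_{pπ} := {X : Im X > 0 and Im(e^{-ipπ}X) < 0}). Then X + λI is invertible for all λ > 0, the Bochner integral f(X) := αI + βX + ∫_{(0,∞)} X(X + λI)^{-1} dμ(λ) exists, and either (β = 0 and μ = 0, in which case f(X) = αI) or f(X) ∈ V_{pπ}, i.e. Im f(X) is positive and invertible and Im(e^{-ipπ} f(X)) is negative and invertible. -/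

import Mathlib

open ContinuousLinearMap MeasureTheory

variable {H : Type*} [NormedAddCommGroup H] [InnerProductSpace ℂ H] [CompleteSpace H]

/-- The imaginary part `(Y - Y*)/(2i)` of a bounded operator. -/
noncomputable def opIm (Y : H →L[ℂ] H) : H →L[ℂ] H := (2 * Complex.I)⁻¹ • (Y - star Y)

lemma aux_lower (B : H →L[ℂ] H) (hB : B.IsPositive) (hU : IsUnit B) :
    ∃ c : ℝ, 0 < c ∧ ∀ y : H, c * ‖y‖ ^ 2 ≤ (inner ℂ y (B y)).re := by
  have hs : IsStrictlyPositive B :=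
    IsStrictlyPositive.iff_of_unital.2 ⟨(nonneg_iff_isPositive B).2 hB, hU⟩
  obtain ⟨b, hb, rfl⟩ := CStarAlgebra.isStrictlyPositive_iff_eq_star_mul_self.1 hs
  obtain ⟨u, rfl⟩ := hb
  set r : ℝ := ‖((u⁻¹ : (H →L[ℂ] H)ˣ) : H →L[ℂ] H)‖ + 1 with hr
  have hr0 : 0 < r := by positivity
  refine ⟨(r ^ 2)⁻¹, by positivity, fun y => ?_⟩
  have h1 : inner ℂ y ((star (u : H →L[ℂ] H) * (u : H →L[ℂ] H)) y)
      = ((‖(u : H →L[ℂ] H) y‖ ^ 2 : ℝ) : ℂ) := by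
    rw [ContinuousLinearMap.mul_apply, ContinuousLinearMap.star_eq_adjoint,
      ContinuousLinearMap.adjoint_inner_right, inner_self_eq_norm_sq_to_K]
    simp
  rw [h1, Complex.ofReal_re, inv_mul_le_iff₀ (by positivity), ← mul_pow]
  have h2 : y = ((u⁻¹ : (H →L[ℂ] H)ˣ) : H →L[ℂ] H) ((u : H →L[ℂ] H) y) := by
    rw [← ContinuousLinearMap.mul_apply, Units.inv_mul]; rfl
  have h3 : ‖y‖ ≤ r * ‖(u : H →L[ℂ] H) y‖ := by
    calc ‖y‖ = ‖((u⁻¹ : (H →L[ℂ] H)ˣ) : H →L[ℂ] H) ((u : H →L[ℂ] H) y)‖ := by rw [← h2]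
      _ ≤ ‖((u⁻¹ : (H →L[ℂ] H)ˣ) : H →L[ℂ] H)‖ * ‖(u : H →L[ℂ] H) y‖ := le_opNorm _ _
      _ ≤ _ := by gcongr; linarith
  gcongr

lemma aux_unit (Y : H →L[ℂ] H) (c : ℝ) (hc : 0 < c)
    (h : ∀ y : H, c * ‖y‖ ^ 2 ≤ (inner ℂ y (Y y)).im) : IsUnit Y := by
  refine ContinuousLinearMap.isUnit_of_forall_le_norm_inner_map Y (c := ⟨c, hc.le⟩) hc
    fun y => ?_
  rw [norm_inner_symm, mul_comm]
  exact (h y).trans ((le_abs_self _).trans (Complex.abs_im_le_norm _))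

lemma aux_inner_opIm (Y : H →L[ℂ] H) (y : H) :
    inner ℂ y (opIm Y y) = (((inner ℂ y (Y y)).im : ℝ) : ℂ) := by
  have h : inner ℂ y (star Y y) = (starRingEnd ℂ) (inner ℂ y (Y y)) := by
    rw [ContinuousLinearMap.star_eq_adjoint, ContinuousLinearMap.adjoint_inner_right,
      inner_conj_symm]
  simp only [opIm, ContinuousLinearMap.smul_apply, ContinuousLinearMap.sub_apply,
    inner_smul_right, inner_sub_right, h]
  rw [Complex.sub_conj]
  have := Complex.I_ne_zero
  field_simp
  push_cast
  ring

lemma aux_opIm (Y : H →L[ℂ] H) (c : ℝ) (hc : 0 < c)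
    (h : ∀ y : H, c * ‖y‖ ^ 2 ≤ (inner ℂ y (Y y)).im) :
    (opIm Y).IsPositive ∧ IsUnit (opIm Y) := by
  constructor
  · rw [ContinuousLinearMap.isPositive_iff_complex]
    intro x
    rw [← inner_conj_symm, aux_inner_opIm]
    simp only [Complex.conj_ofReal]
    refine ⟨by simp, ?_⟩
    have := h x
    have h0 : 0 ≤ c * ‖x‖ ^ 2 := by positivity
    simpa using h0.trans this
  · refine ContinuousLinearMap.isUnit_of_forall_le_norm_inner_map _ (c := ⟨c, hc.le⟩) hc
      fun y => ?_
    rw [norm_inner_symm, mul_comm, aux_inner_opIm, Complex.norm_real]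
    exact (h y).trans (le_abs_self _)

lemma aux_opIm_neg (Y : H →L[ℂ] H) : opIm (-Y) = -opIm Y := by
  simp only [opIm, star_neg, ← smul_neg]
  congr 1
  abel

/-- pointwise bound for the resolvent integrand -/
lemma aux_point (X : H →L[ℂ] H) (l : ℝ) (hl : 0 < l) (hU : IsUnit (X + (l : ℂ) • 1))
    (u : ℂ) (hu : 0 ≤ u.re) (c : ℝ) (hc : 0 < c)
    (h : ∀ y : H, c * ‖y‖ ^ 2 ≤ (u * inner ℂ y (X y)).re) (v : H) :
    c * (l / (‖X‖ + 1 + l) ^ 2) * ‖v‖ ^ 2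
      ≤ (u * inner ℂ v ((X * Ring.inverse (X + (l : ℂ) • 1)) v)).re := by
  set y := Ring.inverse (X + (l : ℂ) • 1) v with hy
  have hv : v = X y + (l : ℂ) • y := by
    have : ((X + (l : ℂ) • 1) * Ring.inverse (X + (l : ℂ) • 1)) v = v := by
      rw [Ring.mul_inverse_cancel _ hU]; rfl
    rw [ContinuousLinearMap.mul_apply, ← hy] at this
    rw [← this]; simp
  have e : inner ℂ v ((X * Ring.inverse (X + (l : ℂ) • 1)) v)
      = ((‖X y‖ ^ 2 : ℝ) : ℂ) + (l : ℂ) * inner ℂ y (X y) := by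
    rw [ContinuousLinearMap.mul_apply, ← hy]
    conv_lhs => rw [hv]
    rw [inner_add_left, inner_smul_left, inner_self_eq_norm_sq_to_K]
    simp
  have hn : ‖v‖ ≤ (‖X‖ + 1 + l) * ‖y‖ := by
    rw [hv]
    refine (norm_add_le _ _).trans ?_
    rw [norm_smul, Complex.norm_real, Real.norm_of_nonneg hl.le]
    have := X.le_opNorm y
    nlinarith [norm_nonneg y]
  have e2 : (u * inner ℂ v ((X * Ring.inverse (X + (l : ℂ) • 1)) v)).re
      = u.re * ‖X y‖ ^ 2 + l * (u * inner ℂ y (X y)).re := by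
    rw [e, mul_add, Complex.add_re, Complex.re_mul_ofReal, mul_left_comm, Complex.re_ofReal_mul]
  rw [e2]
  have hM : 0 < ‖X‖ + 1 + l := by positivity
  have h1 : ‖v‖ ^ 2 ≤ (‖X‖ + 1 + l) ^ 2 * ‖y‖ ^ 2 := by rw [← mul_pow]; gcongr
  calc c * (l / (‖X‖ + 1 + l) ^ 2) * ‖v‖ ^ 2
      ≤ c * (l / (‖X‖ + 1 + l) ^ 2) * ((‖X‖ + 1 + l) ^ 2 * ‖y‖ ^ 2) := by gcongr
    _ = l * (c * ‖y‖ ^ 2) := by field_simp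
    _ ≤ l * (u * inner ℂ y (X y)).re := by gcongr; exact h y
    _ ≤ _ := by have : 0 ≤ u.re * ‖X y‖ ^ 2 := by positivity
                linarith

lemma aux_norm (X : H →L[ℂ] H) (l : ℝ) (hl : 0 < l) (hU : IsUnit (X + (l : ℂ) • 1))
    (c : ℝ) (hc : 0 < c)
    (h : ∀ y : H, c * ‖y‖ ^ 2 ≤ (inner ℂ y (X y)).im) :
    ‖X * Ring.inverse (X + (l : ℂ) • 1)‖ ≤ ‖X‖ * (1 + (1 + ‖X‖) / c) * (1 + l)⁻¹ := by
  rw [mul_assoc]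
  refine (norm_mul_le _ _).trans ?_
  gcongr
  refine ContinuousLinearMap.opNorm_le_bound _ (by positivity) fun v => ?_
  set y := Ring.inverse (X + (l : ℂ) • 1) v with hy
  have hv : v = X y + (l : ℂ) • y := by
    have : ((X + (l : ℂ) • 1) * Ring.inverse (X + (l : ℂ) • 1)) v = v := by
      rw [Ring.mul_inverse_cancel _ hU]; rfl
    rw [ContinuousLinearMap.mul_apply, ← hy] at this
    rw [← this]; simp
  have h1 : c * ‖y‖ ≤ ‖v‖ := by
    by_cases hy0 : ‖y‖ = 0
    · rw [hy0]; simp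
    have hyp : 0 < ‖y‖ := lt_of_le_of_ne (norm_nonneg _) (Ne.symm hy0)
    have e : (inner ℂ y v).im = (inner ℂ y (X y)).im := by
      conv_lhs => rw [hv]
      rw [inner_add_right, inner_smul_right, inner_self_eq_norm_sq_to_K]
      simp [← Complex.ofReal_pow]
    have h2 : c * ‖y‖ ^ 2 ≤ ‖y‖ * ‖v‖ := by
      calc _ ≤ _ := h y
        _ = (inner ℂ y v).im := e.symm
        _ ≤ ‖inner ℂ y v‖ := (le_abs_self _).trans (Complex.abs_im_le_norm _)
        _ ≤ _ := norm_inner_le_norm _ _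
    nlinarith
  have h2 : l * ‖y‖ ≤ ‖v‖ + ‖X‖ * ‖y‖ := by
    have e : (l : ℂ) • y = v - X y := by rw [hv]; simp [← hv]
    have : ‖(l : ℂ) • y‖ ≤ ‖v‖ + ‖X y‖ := by rw [e]; exact norm_sub_le _ _
    rw [norm_smul, Complex.norm_real, Real.norm_of_nonneg hl.le] at this
    have := X.le_opNorm y
    linarith
  have h3 : ‖y‖ ≤ ‖v‖ / c := by rw [le_div_iff₀ hc]; linarith
  have h4 : (1 + l) * ‖y‖ ≤ (1 + (1 + ‖X‖) / c) * ‖v‖ := by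
    have : (1 + ‖X‖) * ‖y‖ ≤ (1 + ‖X‖) * (‖v‖ / c) := by gcongr
    have e : (1 + (1 + ‖X‖) / c) * ‖v‖ = ‖v‖ + (1 + ‖X‖) * (‖v‖ / c) := by ring
    rw [e]; linarith
  have h5 : (0:ℝ) < 1 + l := by positivity
  calc ‖y‖ = ((1 + l) * ‖y‖) * (1 + l)⁻¹ := by field_simp
    _ ≤ ((1 + (1 + ‖X‖) / c) * ‖v‖) * (1 + l)⁻¹ := by gcongr
    _ = _ := by ring

lemma aux_total (X : H →L[ℂ] H) (μ : Measure ℝ) (hμ : ∀ᵐ l ∂μ, 0 < l)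
    (hw : Integrable (fun l : ℝ => l / (‖X‖ + 1 + l) ^ 2) μ)
    (hU : ∀ l : ℝ, 0 < l → IsUnit (X + (l : ℂ) • 1))
    (hI : Integrable (fun l : ℝ => X * Ring.inverse (X + (l : ℂ) • 1)) μ)
    (α β : ℝ) (hα : 0 ≤ α) (hβ : 0 ≤ β)
    (u : ℂ) (hu : 0 ≤ u.re) (c : ℝ) (hc : 0 < c)
    (h : ∀ y : H, c * ‖y‖ ^ 2 ≤ (u * inner ℂ y (X y)).re) (v : H) :
    c * (β + ∫ l, l / (‖X‖ + 1 + l) ^ 2 ∂μ) * ‖v‖ ^ 2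
      ≤ (u * inner ℂ v (((α : ℂ) • 1 + (β : ℂ) • X +
        ∫ l, X * Ring.inverse (X + (l : ℂ) • 1) ∂μ : H →L[ℂ] H) v)).re := by
  let L : (H →L[ℂ] H) →L[ℝ] ℝ := Complex.reCLM.comp
    (((u • ((innerSL ℂ v).comp (ContinuousLinearMap.apply ℂ H v))) :
      (H →L[ℂ] H) →L[ℂ] ℂ).restrictScalars ℝ)
  have hL : ∀ T : H →L[ℂ] H, L T = (u * inner ℂ v (T v)).re := fun T => rfl
  rw [← hL, map_add, map_add]
  have h1 : 0 ≤ L ((α : ℂ) • 1) := by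
    rw [hL]
    have : u * inner ℂ v (((α : ℂ) • (1 : H →L[ℂ] H)) v) = ((α * ‖v‖ ^ 2 : ℝ) : ℂ) * u := by
      simp [inner_smul_right, inner_self_eq_norm_sq_to_K]; ring
    rw [this, Complex.re_ofReal_mul]
    positivity
  have h2 : c * β * ‖v‖ ^ 2 ≤ L ((β : ℂ) • X) := by
    rw [hL]
    have : u * inner ℂ v (((β : ℂ) • X) v) = (β : ℂ) * (u * inner ℂ v (X v)) := by
      simp [inner_smul_right]; ring
    rw [this, Complex.re_ofReal_mul]
    have := mul_le_mul_of_nonneg_left (h v) hβ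
    linarith
  have h3 : c * (∫ l, l / (‖X‖ + 1 + l) ^ 2 ∂μ) * ‖v‖ ^ 2
      ≤ L (∫ l, X * Ring.inverse (X + (l : ℂ) • 1) ∂μ) := by
    rw [← L.integral_comp_comm hI, ← integral_const_mul, ← integral_mul_const]
    refine integral_mono_ae ((hw.const_mul c).mul_const _) (L.integrable_comp hI) ?_
    filter_upwards [hμ] with l hl
    exact aux_point X l hl (hU l hl) u hu c hc h v
  linarith

/-- Sector preservation for non-negative operator monotone functions
`f(x) = α + βx + ∫_{(0,∞)} x/(x+λ) dμ(λ)`: if `X = A + iB` lies in the operator sector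
`V_{pπ}` (i.e. `Im X > 0` and `Im(e^{-ipπ}X) < 0`), then `X + λI` is invertible for `λ > 0`,
the Bochner integral defining `f(X) = αI + βX + ∫ X(X+λI)⁻¹ dμ(λ)` exists, and either
`β = 0` and `μ = 0` (in which case `f(X) = αI`), or `f(X) ∈ V_{pπ}`, i.e. `Im f(X) > 0` and
`Im(e^{-ipπ} f(X)) < 0`. -/
theorem stmt19 [TopologicalSpace.SeparableSpace H] (hinf : ¬ FiniteDimensional ℂ H)
    (p : ℝ) (hp0 : 0 < p) (hp1 : p ≤ 1)
    (α β : ℝ) (hα : 0 ≤ α) (hβ : 0 ≤ β)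
    (μ : Measure ℝ) (hμs : μ (Set.Ioi (0 : ℝ))ᶜ = 0)
    (hμint : Integrable (fun l : ℝ => (1 + l)⁻¹) μ)
    (A B X : H →L[ℂ] H) (hA : IsSelfAdjoint A) (hB : IsSelfAdjoint B)
    (hBpos : B.IsPositive) (hBU : IsUnit B)
    (hsec :
      (Real.sin (p * Real.pi) • A - Real.cos (p * Real.pi) • B).IsPositive ∧
        IsUnit (Real.sin (p * Real.pi) • A - Real.cos (p * Real.pi) • B))
    (hX : X = A + Complex.I • B)
    (fX : H →L[ℂ] H)
    (hfX : fX = (α : ℂ) • 1 + (β : ℂ) • X +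
        ∫ l, X * Ring.inverse (X + (l : ℂ) • 1) ∂μ) :
    (∀ l : ℝ, 0 < l → IsUnit (X + (l : ℂ) • 1)) ∧
    Integrable (fun l : ℝ => X * Ring.inverse (X + (l : ℂ) • 1)) μ ∧
    ((β = 0 ∧ μ = 0 ∧ fX = (α : ℂ) • 1) ∨
      ((opIm fX).IsPositive ∧ IsUnit (opIm fX) ∧
        (-(opIm (Complex.exp (-(p * Real.pi : ℝ) * Complex.I) • fX))).IsPositive ∧
        IsUnit (opIm (Complex.exp (-(p * Real.pi : ℝ) * Complex.I) • fX)))) := by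
  set θ : ℝ := p * Real.pi with hθ
  have hsin : 0 ≤ Real.sin θ := by
    apply Real.sin_nonneg_of_nonneg_of_le_pi
    · positivity
    · nlinarith [Real.pi_pos]
  obtain ⟨c₁, hc₁, hB1⟩ := aux_lower B hBpos hBU
  obtain ⟨c₂, hc₂, hS1⟩ := aux_lower _ hsec.1 hsec.2
  have hpos : ∀ᵐ l ∂μ, (0:ℝ) < l := by
    rw [ae_iff]; exact hμs
  have real_of : ∀ T : H →L[ℂ] H, IsSelfAdjoint T → ∀ y, (inner ℂ y (T y)).im = 0 := by
    intro T hT y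
    have := hT.isSymmetric y y
    rw [← Complex.conj_eq_iff_im, inner_conj_symm]
    exact this
  have hXre : ∀ y, (inner ℂ y (X y)).re = (inner ℂ y (A y)).re := by
    intro y
    simp [hX, inner_add_right, inner_smul_right, real_of B hB y]
  have hXim : ∀ y, (inner ℂ y (X y)).im = (inner ℂ y (B y)).re := by
    intro y
    simp [hX, inner_add_right, inner_smul_right, real_of A hA y]
  have hX1 : ∀ y, c₁ * ‖y‖ ^ 2 ≤ (inner ℂ y (X y)).im := fun y => by rw [hXim]; exact hB1 y
  have hU : ∀ l : ℝ, 0 < l → IsUnit (X + (l : ℂ) • 1) := by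
    intro l hl
    refine aux_unit _ c₁ hc₁ fun y => (hX1 y).trans (le_of_eq ?_)
    simp [inner_add_right, inner_smul_right, inner_self_eq_norm_sq_to_K, ← Complex.ofReal_pow]
  have hres : μ.restrict (Set.Ioi 0) = μ := Measure.restrict_eq_self_of_ae_mem hpos
  have hI : Integrable (fun l : ℝ => X * Ring.inverse (X + (l : ℂ) • 1)) μ := by
    refine Integrable.mono' (hμint.const_mul (‖X‖ * (1 + (1 + ‖X‖) / c₁))) ?_ ?_
    · rw [← hres]
      refine ContinuousOn.aestronglyMeasurable ?_ measurableSet_Ioi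
      intro l hl
      apply ContinuousAt.continuousWithinAt
      refine continuousAt_const.mul ?_
      obtain ⟨w, hw⟩ := hU l hl
      have h1 : ContinuousAt (Ring.inverse : (H →L[ℂ] H) → _) (X + (l : ℂ) • 1) := by
        rw [← hw]; exact NormedRing.inverse_continuousAt w
      exact ContinuousAt.comp (f := fun l : ℝ => X + (l : ℂ) • (1 : H →L[ℂ] H)) h1
        (by fun_prop)
    · filter_upwards [hpos] with l hl
      exact aux_norm X l hl (hU l hl) c₁ hc₁ hX1
  have hw : Integrable (fun l : ℝ => l / (‖X‖ + 1 + l) ^ 2) μ := by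
    refine Integrable.mono' hμint (Measurable.aestronglyMeasurable (by measurability)) ?_
    filter_upwards [hpos] with l hl
    rw [Real.norm_of_nonneg (by positivity), ← one_div, div_le_div_iff₀ (by positivity) (by positivity)]
    nlinarith [norm_nonneg X, mul_nonneg (norm_nonneg X) hl.le]
  refine ⟨hU, hI, ?_⟩
  by_cases hz : β = 0 ∧ μ = 0
  · left
    refine ⟨hz.1, hz.2, ?_⟩
    rw [hfX, hz.1, hz.2]; simp
  right
  have hwn : 0 ≤ᵐ[μ] (fun l : ℝ => l / (‖X‖ + 1 + l) ^ 2) := by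
    filter_upwards [hpos] with l hl
    show (0:ℝ) ≤ _
    positivity
  have hk : 0 < β + ∫ l, l / (‖X‖ + 1 + l) ^ 2 ∂μ := by
    have h0 := integral_nonneg_of_ae hwn
    rcases hβ.lt_or_eq with hb | hb
    · linarith
    rcases h0.lt_or_eq with h1 | h1
    · linarith
    exfalso
    apply hz
    refine ⟨hb.symm, ?_⟩
    rw [eq_comm, integral_eq_zero_iff_of_nonneg_ae hwn hw] at h1
    rw [← ae_eq_bot, ← Filter.empty_mem_iff_bot]
    filter_upwards [hpos, h1] with l hl h2
    have : 0 < l / (‖X‖ + 1 + l) ^ 2 := by positivity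
    simp only [Pi.zero_apply] at h2
    linarith
  have key := fun u hu c hc h v =>
    aux_total X μ hpos hw hU hI α β hα hβ u hu c hc h v
  rw [← hfX] at key
  have r1 := aux_opIm fX _ (mul_pos hc₁ hk) (fun v => by
    have := key (-Complex.I) (by simp) c₁ hc₁ (fun y => by simpa using hX1 y) v
    simpa using this)
  have hexp : Complex.exp (-(θ : ℝ) * Complex.I) = (Real.cos θ : ℂ) - Real.sin θ * Complex.I := by
    rw [Complex.exp_mul_I, Complex.cos_neg, Complex.sin_neg]; push_cast; ring
  have r2 := aux_opIm (-(Complex.exp (-(θ : ℝ) * Complex.I) • fX)) _ (mul_pos hc₂ hk) (fun v => by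
    have := key (Complex.I * Complex.exp (-(θ : ℝ) * Complex.I))
      (by rw [hexp]; simpa [-Complex.ofReal_sin, -Complex.ofReal_cos] using hsin) c₂ hc₂
      (fun y => by
        refine (hS1 y).trans (le_of_eq ?_)
        rw [hexp]
        simp [-Complex.ofReal_sin, -Complex.ofReal_cos, hXre, hXim, inner_sub_right,
          inner_smul_right_eq_smul]
        ) v
    refine this.trans (le_of_eq ?_)
    rw [ContinuousLinearMap.neg_apply, ContinuousLinearMap.smul_apply, inner_neg_right,
      inner_smul_right, mul_assoc]
    simp)
  rw [aux_opIm_neg] at r2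
  refine ⟨r1.1, r1.2, ?_, ?_⟩
  · simpa using r2.1
  · simpa using r2.2
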